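/- Let H_R, H_Q, H_E be finite-dimensional complex Hilbert spaces and let ρ_RQE be a state on H_R⊗H_Q⊗H_E. The following are equivalent: (a) for all finite-dimensional Hilbert spaces H_{Q'}, H_{E'} and every isometry V : H_Q⊗H_E → H_{Q'}⊗H_{E'}, setting σ_{RQ'E'} = (1_R⊗V) ρ_RQE (1_R⊗V)†, one has I(R;Q)_ρ ≥ I(R;Q')_σ; (b) I(R;E|Q)_ρ = 0; (c) for all such isometries V there exists a CPTP map 𝓔 : L(H_Q) → L(H_{Q'}) such that σ_{RQ'} = (id_R⊗𝓔)(ρ_RQ). -/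

import Mathlib

open Matrix Kronecker ComplexOrder

noncomputable section

/-- Von Neumann entropy `S(ρ) = -Tr[ρ log ρ]`, computed from the eigenvalues
(junk value `0` if `ρ` is not Hermitian). -/
def vnEntropy {n : Type*} [Fintype n] [DecidableEq n] (ρ : Matrix n n ℂ) : ℝ :=
  if h : ρ.IsHermitian then ∑ i, Real.negMulLog (h.eigenvalues i) else 0

/-- Partial trace over the first tensor factor. -/
def ptraceLeft {A B : Type*} [Fintype A] (M : Matrix (A × B) (A × B) ℂ) : Matrix B B ℂ :=
  Matrix.of fun x y => ∑ a, M (a, x) (a, y)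

/-- Partial trace over the second tensor factor. -/
def ptraceRight {A B : Type*} [Fintype B] (M : Matrix (A × B) (A × B) ℂ) : Matrix A A ℂ :=
  Matrix.of fun x y => ∑ b, M (x, b) (y, b)

/-- Partial trace over the last factor of a tripartite operator on `R ⊗ Q ⊗ E`. -/
def ptrace3E {R Q E : Type*} [Fintype E] (M : Matrix (R × Q × E) (R × Q × E) ℂ) :
    Matrix (R × Q) (R × Q) ℂ :=
  Matrix.of fun x y => ∑ e, M (x.1, x.2, e) (y.1, y.2, e)

/-- A state is a positive semidefinite operator with unit trace. -/
def IsState {n : Type*} [Fintype n] (ρ : Matrix n n ℂ) : Prop :=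
  ρ.PosSemidef ∧ ρ.trace = 1

/-- Quantum mutual information `I(A;B) = S(ρ_A) + S(ρ_B) - S(ρ_AB)`. -/
def mutualInfo {A B : Type*} [Fintype A] [DecidableEq A] [Fintype B] [DecidableEq B]
    (ρ : Matrix (A × B) (A × B) ℂ) : ℝ :=
  vnEntropy (ptraceRight ρ) + vnEntropy (ptraceLeft ρ) - vnEntropy ρ

/-- Conditional quantum mutual information
`I(R;E|Q) = S(ρ_RQ) + S(ρ_QE) - S(ρ_RQE) - S(ρ_Q)`. -/
def condMutualInfo {R Q E : Type*} [Fintype R] [DecidableEq R] [Fintype Q] [DecidableEq Q]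
    [Fintype E] [DecidableEq E] (ρ : Matrix (R × Q × E) (R × Q × E) ℂ) : ℝ :=
  vnEntropy (ptrace3E ρ) + vnEntropy (ptraceLeft ρ) - vnEntropy ρ
    - vnEntropy (ptraceLeft (ptrace3E ρ))

/-- The map `id_n ⊗ Φ` obtained by applying `Φ` blockwise. -/
def idTensor {A B : Type*} (n : Type*) (Φ : Matrix A A ℂ →ₗ[ℂ] Matrix B B ℂ)
    (M : Matrix (n × A) (n × A) ℂ) : Matrix (n × B) (n × B) ℂ :=
  Matrix.of fun x y => Φ (Matrix.of fun a b => M (x.1, a) (y.1, b)) x.2 y.2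

/-- Complete positivity: for every `k`, `id_{Fin k} ⊗ Φ` preserves positive semidefiniteness. -/
def IsCPMap {A B : Type*} [Fintype A] [Fintype B]
    (Φ : Matrix A A ℂ →ₗ[ℂ] Matrix B B ℂ) : Prop :=
  ∀ (k : ℕ) (M : Matrix (Fin k × A) (Fin k × A) ℂ), M.PosSemidef →
    (idTensor (Fin k) Φ M).PosSemidef

/-- A CPTP map (quantum channel). -/
def IsCPTP {A B : Type*} [Fintype A] [Fintype B]
    (Φ : Matrix A A ℂ →ₗ[ℂ] Matrix B B ℂ) : Prop :=
  IsCPMap Φ ∧ ∀ M : Matrix A A ℂ, (Φ M).trace = M.trace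

/-- The family of states on `Q ⊗ E` steered from `R` by measurements on a tripartite state. -/
def steered {R Q E : Type*} [Fintype R] [Fintype Q] [DecidableEq Q] [Fintype E] [DecidableEq E]
    (ρ : Matrix (R × Q × E) (R × Q × E) ℂ) : Set (Matrix (Q × E) (Q × E) ℂ) :=
  { ω | ∃ P : Matrix R R ℂ, P.PosSemidef ∧
      (ptraceLeft ((P ⊗ₖ (1 : Matrix (Q × E) (Q × E) ℂ)) * ρ)).trace ≠ 0 ∧
      ω = ((ptraceLeft ((P ⊗ₖ (1 : Matrix (Q × E) (Q × E) ℂ)) * ρ)).trace)⁻¹ •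
            ptraceLeft ((P ⊗ₖ (1 : Matrix (Q × E) (Q × E) ℂ)) * ρ) }

/-- A post-selected family of bipartite system-environment states: the normalized
output state space of some completely positive map `𝒫 : Q₀E₀ → QE`. -/
def IsPostSelected {Q E : Type*} [Fintype Q] [Fintype E]
    (S : Set (Matrix (Q × E) (Q × E) ℂ)) : Prop :=
  ∃ (n0 m0 : ℕ)
    (P : Matrix (Fin n0 × Fin m0) (Fin n0 × Fin m0) ℂ →ₗ[ℂ] Matrix (Q × E) (Q × E) ℂ),
    IsCPMap P ∧
    S = { ω | ∃ ρ0, IsState ρ0 ∧ (P ρ0).trace ≠ 0 ∧ ω = ((P ρ0).trace)⁻¹ • P ρ0 }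


theorem integrableOn_and_integral_rpow_mul_div {p q : ℝ} (hp : 0 < p) (hq : 0 < q) :
    MeasureTheory.IntegrableOn (fun t : ℝ => t ^ (-1/2 : ℝ) * (p / (q + t * p))) (Set.Ioi 0) ∧
    ∫ t in Set.Ioi (0 : ℝ), t ^ (-1/2 : ℝ) * (p / (q + t * p)) =
      √p / √q * ∫ t in Set.Ioi (0 : ℝ), Real.rpowIntegrand₀₁ (1/2) t 1 := by
  have hh : (1/2 : ℝ) ∈ Set.Ioo (0 : ℝ) 1 := by norm_num
  have hx : 0 ≤ q / p := by positivity
  have e : Set.EqOn (fun t : ℝ => (p / q) * Real.rpowIntegrand₀₁ (1/2) t (q / p))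
      (fun t : ℝ => t ^ (-1/2 : ℝ) * (p / (q + t * p))) (Set.Ioi 0) := by
    intro t ht
    have ht : 0 < t := ht
    simp only
    rw [Real.rpowIntegrand₀₁_eq_pow_div hh ht.le hx]
    norm_num
    have : q + t * p ≠ 0 := by positivity
    have : t + q / p ≠ 0 := by positivity
    field_simp
    ring
  refine ⟨(MeasureTheory.integrableOn_congr_fun e measurableSet_Ioi).1
    ((Real.integrableOn_rpowIntegrand₀₁_Ioi hh hx).const_mul _), ?_⟩
  rw [← MeasureTheory.setIntegral_congr_fun measurableSet_Ioi e,
    MeasureTheory.integral_const_mul, Real.integral_rpowIntegrand₀₁_eq_rpow_mul_const hh hx,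
    ← mul_assoc, ← Real.sqrt_eq_rpow, Real.sqrt_div hq.le]
  congr 1
  have := Real.sq_sqrt hp.le
  have := Real.sq_sqrt hq.le
  have : 0 < √p := by positivity
  have : 0 < √q := by positivity
  field_simp
  grind

/-- A linear relation between the functions `t ↦ p / (q + t p)` persists for the
values `√p / √q`. -/
theorem sum_sqrt_div_sqrt_of_sum_div {ι : Type*} [Fintype ι] (c : ι → ℂ) (p q : ι → ℝ)
    (hc : ∀ k, c k ≠ 0 → 0 < p k ∧ 0 < q k) {d : ℂ} {a b : ℝ} (ha : 0 < a) (hb : 0 < b)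
    (h : ∀ t : ℝ, 0 < t → ∑ k, c k * ((p k / (q k + t * p k) : ℝ) : ℂ) =
      d * ((a / (b + t * a) : ℝ) : ℂ)) :
    ∑ k, c k * ((√(p k) / √(q k) : ℝ) : ℂ) = d * ((√a / √b : ℝ) : ℂ) := by
  set C := ∫ t in Set.Ioi (0 : ℝ), Real.rpowIntegrand₀₁ (1/2) t 1 with hC
  have hC0 : (C : ℂ) ≠ 0 := by
    have := Real.integral_rpowIntegrand₀₁_one_pos (p := 1/2) (by norm_num)
    exact_mod_cast this.ne'
  have hintegrable : ∀ k, MeasureTheory.IntegrableOn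
      (fun t : ℝ => c k * ((t ^ (-1/2 : ℝ) * (p k / (q k + t * p k)) : ℝ) : ℂ)) (Set.Ioi 0) := by
    intro k
    by_cases hk : c k = 0
    · simp [hk]
    · exact (integrableOn_and_integral_rpow_mul_div (hc k hk).1 (hc k hk).2).1.ofReal.const_mul _
  have hval : ∀ k, ∫ t in Set.Ioi (0 : ℝ),
      c k * ((t ^ (-1/2 : ℝ) * (p k / (q k + t * p k)) : ℝ) : ℂ) =
        c k * ((√(p k) / √(q k) : ℝ) : ℂ) * C := by
    intro k
    by_cases hk : c k = 0
    · simp [hk]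
    · rw [MeasureTheory.integral_const_mul, integral_complex_ofReal,
        (integrableOn_and_integral_rpow_mul_div (hc k hk).1 (hc k hk).2).2]
      push_cast
      ring
  have hd : ∫ t in Set.Ioi (0 : ℝ), d * ((t ^ (-1/2 : ℝ) * (a / (b + t * a)) : ℝ) : ℂ) =
      d * ((√a / √b : ℝ) : ℂ) * C := by
    rw [MeasureTheory.integral_const_mul, integral_complex_ofReal,
        (integrableOn_and_integral_rpow_mul_div ha hb).2]
    push_cast
    ring
  apply mul_right_cancel₀ hC0
  rw [← hd, Finset.sum_mul, ← Finset.sum_congr rfl fun k _ => hval k,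
    ← MeasureTheory.integral_finsetSum _ fun k _ => hintegrable k]
  refine MeasureTheory.setIntegral_congr_fun measurableSet_Ioi fun t ht => ?_
  have := congrArg (fun z => ((t ^ (-1/2 : ℝ) : ℝ) : ℂ) * z) (h t ht)
  simp only [Finset.mul_sum] at this
  simp only [Complex.ofReal_mul]
  rw [← sub_eq_zero] at this ⊢
  rw [← this]
  congr 1
  · exact Finset.sum_congr rfl fun k _ => by ring
  · ring

/-- The antiderivative of `t ↦ ∑ cₖ pₖ / (qₖ + t pₖ)`. -/
def logSum {ι : Type*} [Fintype ι] (c p q : ι → ℝ) (t : ℝ) : ℝ :=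
  ∑ k, c k * Real.log (q k + t * p k)

theorem hasDerivAt_logSum {ι : Type*} [Fintype ι] {c p q : ι → ℝ}
    (hc : ∀ k, c k ≠ 0 → 0 < p k ∧ 0 < q k) {t : ℝ} (ht : 0 ≤ t) :
    HasDerivAt (logSum c p q) (∑ k, c k * (p k / (q k + t * p k))) t := by
  unfold logSum
  refine HasDerivAt.fun_sum fun k _ => ?_
  by_cases hk : c k = 0
  · simpa [hk] using hasDerivAt_const t (0 : ℝ)
  · obtain ⟨h1, h2⟩ := hc k hk
    have h3 : q k + t * p k ≠ 0 := by positivity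
    have : HasDerivAt (fun t => q k + t * p k) (p k) t := by
      simpa using ((hasDerivAt_id t).mul_const (p k)).const_add (q k)
    exact (this.log h3).const_mul _

theorem tendsto_logSum {ι : Type*} [Fintype ι] {c p q : ι → ℝ}
    (hc : ∀ k, c k ≠ 0 → 0 < p k ∧ 0 < q k) :
    Filter.Tendsto (fun t => logSum c p q t - (∑ k, c k) * Real.log t) Filter.atTop
      (nhds (∑ k, c k * Real.log (p k))) := by
  have h0 : ∀ k, Filter.Tendsto (fun t => c k * (Real.log (q k / t + p k))) Filter.atTop
      (nhds (c k * Real.log (p k))) := by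
    intro k
    by_cases hk : c k = 0
    · simp [hk]
    · obtain ⟨h1, h2⟩ := hc k hk
      refine Filter.Tendsto.const_mul _ (Filter.Tendsto.log ?_ h1.ne')
      simpa using (Filter.Tendsto.const_div_atTop Filter.tendsto_id (q k)).add_const (p k)
  refine (tendsto_finsetSum Finset.univ fun k _ => h0 k).congr' ?_
  filter_upwards [Filter.eventually_gt_atTop 0] with t ht
  rw [logSum, Finset.sum_mul, ← Finset.sum_sub_distrib]
  refine Finset.sum_congr rfl fun k _ => ?_
  by_cases hk : c k = 0
  · simp [hk]
  · obtain ⟨h1, h2⟩ := hc k hk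
    rw [← mul_sub, ← Real.log_div (by positivity) ht.ne']
    congr 2
    field_simp

theorem logSum_comparison {ι κ : Type*} [Fintype ι] [Fintype κ] {c p q : ι → ℝ} {c' p' q' : κ → ℝ}
    (hc : ∀ k, c k ≠ 0 → 0 < p k ∧ 0 < q k) (hc' : ∀ k, c' k ≠ 0 → 0 < p' k ∧ 0 < q' k)
    (hsum : ∑ k, c k = ∑ k, c' k)
    (hle : ∀ t : ℝ, 0 < t →
      ∑ k, c' k * (p' k / (q' k + t * p' k)) ≤ ∑ k, c k * (p k / (q k + t * p k))) :
    ∑ k, c k * Real.log (q k) - ∑ k, c' k * Real.log (q' k) ≤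
        ∑ k, c k * Real.log (p k) - ∑ k, c' k * Real.log (p' k) ∧
      (∑ k, c k * Real.log (q k) - ∑ k, c' k * Real.log (q' k) =
          ∑ k, c k * Real.log (p k) - ∑ k, c' k * Real.log (p' k) →
        ∀ t : ℝ, 0 < t →
          ∑ k, c' k * (p' k / (q' k + t * p' k)) = ∑ k, c k * (p k / (q k + t * p k))) := by
  set K : ℝ → ℝ := fun t => logSum c p q t - logSum c' p' q' t with hK
  have hder : ∀ t, 0 ≤ t → HasDerivAt K (∑ k, c k * (p k / (q k + t * p k)) -
      ∑ k, c' k * (p' k / (q' k + t * p' k))) t := fun t ht =>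
    (hasDerivAt_logSum hc ht).sub (hasDerivAt_logSum hc' ht)
  have hlim : Filter.Tendsto K Filter.atTop
      (nhds (∑ k, c k * Real.log (p k) - ∑ k, c' k * Real.log (p' k))) := by
    refine ((tendsto_logSum hc).sub (tendsto_logSum hc')).congr fun t => ?_
    rw [hsum]
    simp [hK]
  have hmono : MonotoneOn K (Set.Ici 0) := by
    refine monotoneOn_of_hasDerivWithinAt_nonneg (convex_Ici 0)
      (fun t ht => (hder t ht).continuousAt.continuousWithinAt)
      (fun t ht => (hder t (interior_subset ht)).hasDerivWithinAt) fun t ht => ?_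
    rw [interior_Ici] at ht
    exact sub_nonneg.2 (hle t ht)
  have hup : ∀ t, 0 ≤ t → K t ≤ ∑ k, c k * Real.log (p k) - ∑ k, c' k * Real.log (p' k) := by
    intro t ht
    refine ge_of_tendsto hlim ?_
    filter_upwards [Filter.eventually_ge_atTop t] with s hs
    exact hmono ht (ht.trans hs) hs
  have hK0 : K 0 = ∑ k, c k * Real.log (q k) - ∑ k, c' k * Real.log (q' k) := by
    simp [hK, logSum]
  refine ⟨hK0 ▸ hup 0 le_rfl, fun heq t ht => ?_⟩
  have hconst : ∀ s, 0 ≤ s → K s = K 0 := fun s hs =>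
    le_antisymm ((hup s hs).trans (heq.symm.trans hK0.symm).le)
      (hmono (Set.mem_Ici.2 le_rfl) hs hs)
  have : HasDerivAt K 0 t := by
    refine (hasDerivAt_const t (K 0)).congr_of_eventuallyEq ?_
    filter_upwards [lt_mem_nhds ht] with s hs
    exact hconst s hs.le
  have := (hder t ht.le).unique this
  linarith

/-! ### The quadratic functional and its maximum -/

/-- A concave quadratic functional of `X` whose maximum over `X` is the value at `t` of the
integrand in the integral representation of the relative entropy of `ρ` and `σ`. -/
def quadFun {n : Type*} [Fintype n] (ρ σ X : Matrix n n ℂ) (t : ℝ) : ℝ :=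
  2 * (Xᴴ * ρ).trace.re - (Xᴴ * σ * X).trace.re - t * (X * ρ * Xᴴ).trace.re

/-- Unitary diagonalizations of two positive semidefinite matrices `ρ` and `σ`, the support of `ρ`
being contained in that of `σ`. -/
structure SpecPair {n : Type*} [Fintype n] [DecidableEq n] (ρ σ : Matrix n n ℂ) where
  U : Matrix n n ℂ
  W : Matrix n n ℂ
  p : n → ℝ
  q : n → ℝ
  hU : Uᴴ * U = 1
  hW : Wᴴ * W = 1
  hp : ∀ i, 0 ≤ p i
  hq : ∀ i, 0 ≤ q i
  left_eq : ρ = U * diagonal (fun i => (p i : ℂ)) * Uᴴ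
  right_eq : σ = W * diagonal (fun i => (q i : ℂ)) * Wᴴ
  supp : ∀ i j, q i = 0 → (Wᴴ * U) i j * p j = 0

namespace SpecPair

variable {n : Type*} [Fintype n] [DecidableEq n] {ρ σ : Matrix n n ℂ} (D : SpecPair ρ σ)

/-- The overlaps of the two eigenbases. -/
def overlap : Matrix n n ℂ := D.Wᴴ * D.U

/-- The spectral weights. -/
def weight (k : n × n) : ℝ := Complex.normSq (D.overlap k.1 k.2) * D.p k.2

/-- The maximal value of `quadFun ρ σ · t`. -/
def gap (t : ℝ) : ℝ := ∑ k : n × n, D.weight k * (D.p k.2 / (D.q k.1 + t * D.p k.2))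

/-- The maximizer of `quadFun ρ σ · t`. -/
def optimizer (t : ℝ) : Matrix n n ℂ :=
  D.W * (of fun i j => D.overlap i j * ((D.p j / (D.q i + t * D.p j) : ℝ) : ℂ)) * D.Uᴴ

theorem hU' : D.U * D.Uᴴ = 1 := mul_eq_one_comm.1 D.hU

theorem hW' : D.W * D.Wᴴ = 1 := mul_eq_one_comm.1 D.hW

theorem weight_pos (k : n × n) (hk : D.weight k ≠ 0) : 0 < D.p k.2 ∧ 0 < D.q k.1 := by
  have h2 : D.p k.2 ≠ 0 := fun h => hk (by simp [weight, h])
  have h1 : D.overlap k.1 k.2 ≠ 0 := fun h => hk (by simp [weight, h])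
  refine ⟨lt_of_le_of_ne (D.hp _) h2.symm, lt_of_le_of_ne (D.hq _) fun h => ?_⟩
  exact mul_ne_zero h1 (Complex.ofReal_ne_zero.2 h2) (D.supp _ _ h.symm)

theorem quad_pointwise (y o : ℂ) {p q t : ℝ} (hp : 0 ≤ p) (hq : 0 ≤ q) (ht : 0 < t) :
    2 * (star y * (o * p)).re - (q + t * p) * Complex.normSq y =
      Complex.normSq o * p * (p / (q + t * p)) -
        (q + t * p) * Complex.normSq (y - o * ((p / (q + t * p) : ℝ) : ℂ)) := by
  rcases hp.eq_or_lt with rfl | hp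
  · simp
  · have : q + t * p ≠ 0 := by positivity
    simp only [Complex.normSq_apply, Complex.sub_re, Complex.sub_im, Complex.mul_re, Complex.mul_im,
      Complex.ofReal_re, Complex.ofReal_im, Complex.star_def, Complex.conj_re, Complex.conj_im]
    field_simp
    ring

theorem quadFun_eq (X : Matrix n n ℂ) {t : ℝ} (ht : 0 < t) :
    quadFun ρ σ X t = D.gap t - ∑ k : n × n, (D.q k.1 + t * D.p k.2) *
      Complex.normSq ((D.Wᴴ * X * D.U) k.1 k.2 -
        D.overlap k.1 k.2 * ((D.p k.2 / (D.q k.1 + t * D.p k.2) : ℝ) : ℂ)) := by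
  set Y := D.Wᴴ * X * D.U with hY
  set dp : Matrix n n ℂ := diagonal (fun i => (D.p i : ℂ)) with hdp
  set dq : Matrix n n ℂ := diagonal (fun i => (D.q i : ℂ)) with hdq
  have hX : X = D.W * Y * D.Uᴴ := by
    simp only [hY, ← mul_assoc, D.hW', one_mul]
    rw [mul_assoc, D.hU', mul_one]
  have e1 : (Xᴴ * ρ).trace = (Yᴴ * (D.overlap * dp)).trace := by
    have : Xᴴ * ρ = Xᴴ * (D.U * dp * D.Uᴴ) := congrArg _ D.left_eq
    rw [this, hX, overlap]
    simp only [conjTranspose_mul, conjTranspose_conjTranspose]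
    rw [← mul_assoc _ _ D.Uᴴ, trace_mul_comm _ D.Uᴴ]
    simp only [← mul_assoc, D.hU, one_mul]
  have e2 : (Xᴴ * σ * X).trace = (Yᴴ * (dq * Y)).trace := by
    rw [D.right_eq, hX, ← hdq]
    simp only [conjTranspose_mul, conjTranspose_conjTranspose]
    rw [← mul_assoc _ _ D.Uᴴ, trace_mul_comm _ D.Uᴴ]
    have : D.Uᴴ * (D.U * (Yᴴ * D.Wᴴ) * (D.W * dq * D.Wᴴ) * (D.W * Y)) =
      (D.Uᴴ * D.U) * Yᴴ * (D.Wᴴ * D.W) * dq * (D.Wᴴ * D.W) * Y := by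
      simp only [mul_assoc]
    rw [this, D.hU, D.hW]
    simp only [one_mul, mul_one, mul_assoc]
  have e3 : (X * ρ * Xᴴ).trace = (Yᴴ * (Y * dp)).trace := by
    rw [D.left_eq, hX, ← hdp]
    simp only [conjTranspose_mul, conjTranspose_conjTranspose]
    rw [← mul_assoc _ _ D.Wᴴ, ← mul_assoc _ _ D.Wᴴ, trace_mul_comm _ D.Wᴴ]
    have : D.Wᴴ * (D.W * Y * D.Uᴴ * (D.U * dp * D.Uᴴ) * (D.U * Yᴴ)) =
      (D.Wᴴ * D.W) * Y * (D.Uᴴ * D.U) * dp * (D.Uᴴ * D.U) * Yᴴ := by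
      simp only [mul_assoc]
    rw [this, D.hU, D.hW, trace_mul_comm]
    simp only [one_mul, mul_one]
  have tr : ∀ Z : Matrix n n ℂ, (Yᴴ * Z).trace.re =
      ∑ k : n × n, (star (Y k.1 k.2) * Z k.1 k.2).re := by
    intro Z
    rw [Fintype.sum_prod_type, Finset.sum_comm]
    simp only [trace, diag, mul_apply, conjTranspose_apply, Complex.re_sum]
  rw [quadFun, e1, e2, e3, tr, tr, tr, gap, Finset.mul_sum, Finset.mul_sum,
    ← Finset.sum_sub_distrib, ← Finset.sum_sub_distrib, ← Finset.sum_sub_distrib]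
  refine Finset.sum_congr rfl fun k _ => ?_
  rw [weight, ← quad_pointwise _ _ (D.hp k.2) (D.hq k.1) ht]
  simp only [hdp, hdq, mul_diagonal, diagonal_mul, Complex.normSq_apply, Complex.mul_re,
    Complex.mul_im, Complex.ofReal_re, Complex.ofReal_im, Complex.star_def, Complex.conj_re,
    Complex.conj_im]
  ring

theorem conj_optimizer (t : ℝ) : D.Wᴴ * D.optimizer t * D.U =
    of fun i j => D.overlap i j * ((D.p j / (D.q i + t * D.p j) : ℝ) : ℂ) := by
  simp only [optimizer, ← mul_assoc, D.hW, one_mul]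
  rw [mul_assoc, D.hU, mul_one]

theorem quadFun_optimizer {t : ℝ} (ht : 0 < t) : quadFun ρ σ (D.optimizer t) t = D.gap t := by
  rw [D.quadFun_eq _ ht, conj_optimizer]
  simp

theorem quadFun_le {t : ℝ} (ht : 0 < t) (X : Matrix n n ℂ) : quadFun ρ σ X t ≤ D.gap t := by
  rw [D.quadFun_eq _ ht]
  refine sub_le_self _ (Finset.sum_nonneg fun k _ => mul_nonneg ?_ (Complex.normSq_nonneg _))
  exact add_nonneg (D.hq _) (mul_nonneg ht.le (D.hp _))

theorem eq_of_quadFun_eq {t : ℝ} (ht : 0 < t) {X : Matrix n n ℂ} (h : quadFun ρ σ X t = D.gap t)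
    {i j : n} (hj : 0 < D.p j) :
    (D.Wᴴ * X * D.U) i j = D.overlap i j * ((D.p j / (D.q i + t * D.p j) : ℝ) : ℂ) := by
  rw [D.quadFun_eq _ ht, sub_eq_self, Finset.sum_eq_zero_iff_of_nonneg fun k _ => mul_nonneg
    (add_nonneg (D.hq _) (mul_nonneg ht.le (D.hp _))) (Complex.normSq_nonneg _)] at h
  have h := h (i, j) (Finset.mem_univ _)
  have : 0 < D.q i + t * D.p j := add_pos_of_nonneg_of_pos (D.hq i) (mul_pos ht hj)
  simpa [this.ne', sub_eq_zero] using h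

theorem sum_overlap_left (j : n) : ∑ i, Complex.normSq (D.overlap i j) = 1 := by
  have h : D.overlapᴴ * D.overlap = 1 := by
    have : D.overlapᴴ * D.overlap = D.Uᴴ * (D.W * D.Wᴴ) * D.U := by
      simp [overlap, mul_assoc]
    rw [this, D.hW', mul_one, D.hU]
  have := congrFun (congrFun h j) j
  simp only [mul_apply, conjTranspose_apply, one_apply_eq, Complex.star_def,
    ← Complex.normSq_eq_conj_mul_self] at this
  exact_mod_cast this

theorem sum_weight_mul (f : n → ℝ) :
    ∑ k : n × n, D.weight k * f k.2 = ∑ j, D.p j * f j := by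
  rw [Fintype.sum_prod_type, Finset.sum_comm]
  refine Finset.sum_congr rfl fun j _ => ?_
  simp only [weight, mul_assoc]
  rw [← Finset.sum_mul, sum_overlap_left, one_mul]

theorem sum_weight : ∑ k : n × n, D.weight k = ρ.trace.re := by
  have := D.sum_weight_mul fun _ => 1
  simp only [mul_one] at this
  rw [this, congrArg trace D.left_eq, trace_mul_comm, ← mul_assoc, D.hU, one_mul, trace_diagonal, Complex.re_sum]
  simp

theorem sum_weight_right (i : n) : ∑ j, D.weight (i, j) = ((D.Wᴴ * ρ * D.W) i i).re := by
  have : D.Wᴴ * ρ * D.W = D.overlap * diagonal (fun i => (D.p i : ℂ)) * D.overlapᴴ := by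
    refine (congrArg (fun τ => D.Wᴴ * τ * D.W) D.left_eq).trans ?_
    simp [overlap, mul_assoc]
  rw [this, mul_apply, Complex.re_sum]
  refine Finset.sum_congr rfl fun j _ => ?_
  simp [weight, Complex.normSq_apply, mul_diagonal]
  ring

variable {m : Type*} [Fintype m] [DecidableEq m] {ρ' σ' : Matrix m m ℂ}

/-- Monotonicity of the relative entropy, with its equality condition, in terms of the quadratic
functional. -/
theorem monotone (D' : SpecPair ρ' σ') (htr : ρ.trace = ρ'.trace) (Ψ : Matrix m m ℂ → Matrix n n ℂ)
    (hΨ : ∀ X t, 0 < t → quadFun ρ' σ' X t ≤ quadFun ρ σ (Ψ X) t) :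
    ∑ k, D.weight k * Real.log (D.q k.1) - ∑ k, D'.weight k * Real.log (D'.q k.1) ≤
        ∑ k, D.weight k * Real.log (D.p k.2) - ∑ k, D'.weight k * Real.log (D'.p k.2) ∧
      (∑ k, D.weight k * Real.log (D.q k.1) - ∑ k, D'.weight k * Real.log (D'.q k.1) =
          ∑ k, D.weight k * Real.log (D.p k.2) - ∑ k, D'.weight k * Real.log (D'.p k.2) →
        ∀ t, 0 < t → ∀ i j, 0 < D.p j → (D.Wᴴ * Ψ (D'.optimizer t) * D.U) i j =
          D.overlap i j * ((D.p j / (D.q i + t * D.p j) : ℝ) : ℂ)) := by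
  have hle : ∀ t, 0 < t → D'.gap t ≤ quadFun ρ σ (Ψ (D'.optimizer t)) t := fun t ht =>
    (D'.quadFun_optimizer ht).symm.le.trans (hΨ _ t ht)
  obtain ⟨h1, h2⟩ := logSum_comparison (c := D.weight) (c' := D'.weight)
    (p := fun k => D.p k.2) (q := fun k => D.q k.1)
    (p' := fun k => D'.p k.2) (q' := fun k => D'.q k.1) D.weight_pos D'.weight_pos
    (by rw [D.sum_weight, D'.sum_weight, htr])
    (fun t ht => (hle t ht).trans (D.quadFun_le ht _))
  refine ⟨h1, fun heq t ht i j hj => D.eq_of_quadFun_eq ht (le_antisymm (D.quadFun_le ht _) ?_) hj⟩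
  exact (h2 heq t ht).symm.le.trans (hle t ht)

end SpecPair

/-! ### Partial traces -/

section PartialTrace

set_option linter.unusedSectionVars false

variable {R B C F : Type*} [Fintype R] [DecidableEq R] [Fintype B] [DecidableEq B]
  [Fintype C] [DecidableEq C] [Fintype F] [DecidableEq F]

theorem one_kronecker_mul_apply (V : Matrix C B ℂ) {S : Type*} (M : Matrix (R × B) S ℂ) (x : R × C)
    (y : S) : (((1 : Matrix R R ℂ) ⊗ₖ V) * M) x y = ∑ b, V x.2 b * M (x.1, b) y := by
  simp [mul_apply, Fintype.sum_prod_type, one_apply, ite_mul, Finset.sum_ite_irrel]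

theorem mul_one_kronecker_apply (V : Matrix B C ℂ) {S : Type*} (M : Matrix S (R × B) ℂ) (x : S)
    (y : R × C) : (M * ((1 : Matrix R R ℂ) ⊗ₖ V)) x y = ∑ b, M x (y.1, b) * V b y.2 := by
  simp [mul_apply, Fintype.sum_prod_type, one_apply, ite_mul, mul_ite, Finset.sum_ite_irrel]

theorem conjTranspose_one_kronecker (V : Matrix C B ℂ) :
    ((1 : Matrix R R ℂ) ⊗ₖ V)ᴴ = (1 : Matrix R R ℂ) ⊗ₖ Vᴴ := by
  rw [conjTranspose_kronecker, conjTranspose_one]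

theorem one_kronecker_isometry {V : Matrix C B ℂ} (hV : Vᴴ * V = 1) :
    ((1 : Matrix R R ℂ) ⊗ₖ V)ᴴ * ((1 : Matrix R R ℂ) ⊗ₖ V) = 1 := by
  rw [conjTranspose_one_kronecker, ← mul_kronecker_mul, hV, one_mul, one_kronecker_one]

theorem ptraceLeft_conj (V : Matrix C B ℂ) (ρ : Matrix (R × B) (R × B) ℂ) :
    ptraceLeft (((1 : Matrix R R ℂ) ⊗ₖ V) * ρ * ((1 : Matrix R R ℂ) ⊗ₖ V)ᴴ) =
      V * ptraceLeft ρ * Vᴴ := by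
  ext x y
  rw [conjTranspose_one_kronecker]
  simp only [ptraceLeft, of_apply, mul_one_kronecker_apply, one_kronecker_mul_apply]
  simp only [mul_apply, of_apply, Finset.sum_mul, Finset.mul_sum]
  rw [Finset.sum_comm]
  refine Finset.sum_congr rfl fun b _ => ?_
  rw [Finset.sum_comm]

theorem ptraceLeft_posSemidef {ρ : Matrix (R × B) (R × B) ℂ} (hρ : ρ.PosSemidef) :
    (ptraceLeft ρ).PosSemidef := by
  have : ptraceLeft ρ = ∑ r : R, ρ.submatrix (fun b => (r, b)) (fun b => (r, b)) := by
    ext x y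
    simp [ptraceLeft, Matrix.sum_apply]
  rw [this]
  exact posSemidef_sum _ fun r _ => hρ.submatrix _

theorem ptrace3E_posSemidef {ρ : Matrix (R × B × F) (R × B × F) ℂ} (hρ : ρ.PosSemidef) :
    (ptrace3E ρ).PosSemidef := by
  have : ptrace3E ρ = ∑ f : F, ρ.submatrix (fun x : R × B => (x.1, x.2, f))
      (fun x => (x.1, x.2, f)) := by
    ext x y
    simp [ptrace3E, Matrix.sum_apply]
  rw [this]
  exact posSemidef_sum _ fun r _ => hρ.submatrix _

theorem trace_ptraceRight (ρ : Matrix (R × B) (R × B) ℂ) : (ptraceRight ρ).trace = ρ.trace := by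
  simp only [trace, diag, ptraceRight, of_apply, Fintype.sum_prod_type]

/-- The matrix `X ⊗ 1` on `R ⊗ B ⊗ F`. -/
def extendE (F : Type*) [DecidableEq F] (X : Matrix (R × B) (R × B) ℂ) :
    Matrix (R × B × F) (R × B × F) ℂ :=
  (X ⊗ₖ (1 : Matrix F F ℂ)).submatrix (Equiv.prodAssoc R B F).symm (Equiv.prodAssoc R B F).symm

theorem extendE_mul (X Y : Matrix (R × B) (R × B) ℂ) :
    extendE F (X * Y) = extendE F X * extendE F Y := by
  rw [extendE, extendE, extendE, submatrix_mul_equiv, ← mul_kronecker_mul, one_mul]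

theorem extendE_conjTranspose (X : Matrix (R × B) (R × B) ℂ) :
    extendE F Xᴴ = (extendE F X)ᴴ := by
  rw [extendE, extendE, conjTranspose_submatrix, conjTranspose_kronecker, conjTranspose_one]

theorem extendE_one : extendE F (1 : Matrix (R × B) (R × B) ℂ) = 1 := by
  rw [extendE, one_kronecker_one, submatrix_one_equiv]

theorem extendE_add (X Y : Matrix (R × B) (R × B) ℂ) :
    extendE F (X + Y) = extendE F X + extendE F Y := by
  ext
  simp [extendE, add_mul]

theorem extendE_smul (c : ℂ) (X : Matrix (R × B) (R × B) ℂ) :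
    extendE F (c • X) = c • extendE F X := by
  ext
  simp [extendE, mul_assoc]

theorem trace_extendE_mul (X : Matrix (R × B) (R × B) ℂ)
    (M : Matrix (R × B × F) (R × B × F) ℂ) :
    (extendE F X * M).trace = (X * ptrace3E M).trace := by
  simp only [trace, diag, mul_apply, extendE, ptrace3E, submatrix_apply, kroneckerMap_apply,
    of_apply, Finset.mul_sum, Fintype.sum_prod_type, Equiv.prodAssoc_symm_apply, one_apply,
    mul_ite, mul_one, mul_zero, ite_mul, zero_mul, Finset.sum_ite_eq, Finset.mem_univ, if_true]
  refine Finset.sum_congr rfl fun r _ => Finset.sum_congr rfl fun b _ => ?_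
  rw [Finset.sum_comm]
  refine Finset.sum_congr rfl fun r' _ => ?_
  rw [Finset.sum_comm]

theorem trace_ptrace3E (M : Matrix (R × B × F) (R × B × F) ℂ) :
    (ptrace3E M).trace = M.trace := by
  have := trace_extendE_mul 1 M
  rwa [extendE_one, one_mul, one_mul, eq_comm] at this

/-- The reduced output of an isometry `V : B → C ⊗ F` acting on a part of `ρ`. -/
def reduced (V : Matrix (C × F) B ℂ) (ρ : Matrix (R × B) (R × B) ℂ) :
    Matrix (R × C) (R × C) ℂ :=
  ptrace3E (((1 : Matrix R R ℂ) ⊗ₖ V) * ρ * ((1 : Matrix R R ℂ) ⊗ₖ V)ᴴ)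

theorem reduced_posSemidef (V : Matrix (C × F) B ℂ) {ρ : Matrix (R × B) (R × B) ℂ}
    (hρ : ρ.PosSemidef) : (reduced V ρ).PosSemidef :=
  ptrace3E_posSemidef (hρ.mul_mul_conjTranspose_same _)

theorem trace_reduced {V : Matrix (C × F) B ℂ} (hV : Vᴴ * V = 1) (ρ : Matrix (R × B) (R × B) ℂ) :
    (reduced V ρ).trace = ρ.trace := by
  rw [reduced, trace_ptrace3E, trace_mul_comm, ← Matrix.mul_assoc, one_kronecker_isometry hV, one_mul]

theorem ptraceLeft_reduced (V : Matrix (C × F) B ℂ) (ρ : Matrix (R × B) (R × B) ℂ) :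
    ptraceLeft (reduced V ρ) = ptraceRight (V * ptraceLeft ρ * Vᴴ) := by
  rw [← ptraceLeft_conj, reduced]
  ext x y
  simp only [ptraceLeft, ptraceRight, ptrace3E, of_apply]
  exact Finset.sum_comm

theorem reduced_one_kronecker (V : Matrix (C × F) B ℂ) (τ : Matrix B B ℂ) :
    reduced V ((1 : Matrix R R ℂ) ⊗ₖ τ) = (1 : Matrix R R ℂ) ⊗ₖ ptraceRight (V * τ * Vᴴ) := by
  rw [reduced, conjTranspose_one_kronecker, ← mul_kronecker_mul, ← mul_kronecker_mul, one_mul,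
    one_mul]
  ext x y
  simp [ptrace3E, ptraceRight, Finset.mul_sum]

/-- The adjoint of `reduced V`. -/
def reducedAdj (V : Matrix (C × F) B ℂ) (X : Matrix (R × C) (R × C) ℂ) :
    Matrix (R × B) (R × B) ℂ :=
  ((1 : Matrix R R ℂ) ⊗ₖ V)ᴴ * extendE F X * ((1 : Matrix R R ℂ) ⊗ₖ V)

theorem re_trace_compress_le {n m : Type*} [Fintype n] [Fintype m] [DecidableEq n] [DecidableEq m]
    {V : Matrix m n ℂ} (hV : Vᴴ * V = 1) {N : Matrix m m ℂ} (hN : N.PosSemidef) :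
    (Vᴴ * N * V).trace.re ≤ N.trace.re := by
  have h := (hN.mul_mul_conjTranspose_same (1 - V * Vᴴ)).trace_nonneg
  have hh : (1 - V * Vᴴ)ᴴ * (1 - V * Vᴴ) = 1 - V * Vᴴ := by
    have : V * Vᴴ * (V * Vᴴ) = V * Vᴴ := by
      rw [Matrix.mul_assoc, ← Matrix.mul_assoc Vᴴ, hV, Matrix.one_mul]
    simp [sub_mul, mul_sub, this]
  rw [trace_mul_comm, ← Matrix.mul_assoc, hh, sub_mul, one_mul, trace_sub, Matrix.mul_assoc V,
    trace_mul_comm V] at h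
  have := (Complex.le_def.1 h).1
  simp only [Complex.zero_re, Complex.sub_re] at this
  linarith

theorem quadFun_reduced_le {V : Matrix (C × F) B ℂ} (hV : Vᴴ * V = 1)
    {ρ σ : Matrix (R × B) (R × B) ℂ} (hρ : ρ.PosSemidef) (hσ : σ.PosSemidef)
    (X : Matrix (R × C) (R × C) ℂ) {t : ℝ} (ht : 0 < t) :
    quadFun (reduced V ρ) (reduced V σ) X t ≤ quadFun ρ σ (reducedAdj V X) t := by
  set T := ((1 : Matrix R R ℂ) ⊗ₖ V) with hT
  have hTT : Tᴴ * T = 1 := one_kronecker_isometry hV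
  have hadj : (reducedAdj V X)ᴴ = Tᴴ * (extendE F X)ᴴ * T := by
    simp [reducedAdj, hT, Matrix.mul_assoc]
  have e1 : (Xᴴ * reduced V ρ).trace = ((reducedAdj V X)ᴴ * ρ).trace := by
    rw [reduced, ← trace_extendE_mul, hadj, extendE_conjTranspose, ← hT, ← Matrix.mul_assoc,
      trace_mul_comm _ Tᴴ]
    simp only [Matrix.mul_assoc]
  have e2 : ((reducedAdj V X)ᴴ * σ * reducedAdj V X).trace.re ≤
      (Xᴴ * reduced V σ * X).trace.re := by
    rw [trace_mul_comm (Xᴴ * reduced V σ), ← Matrix.mul_assoc, reduced, ← trace_extendE_mul, extendE_mul,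
      extendE_conjTranspose, ← hT, Matrix.mul_assoc (extendE F X), trace_mul_comm (extendE F X), hadj,
      reducedAdj, ← hT]
    convert re_trace_compress_le hTT ((hσ.mul_mul_conjTranspose_same T).conjTranspose_mul_mul_same
      (extendE F X)) using 3
    simp only [Matrix.mul_assoc]
  have e3 : (reducedAdj V X * ρ * (reducedAdj V X)ᴴ).trace.re ≤
      (X * reduced V ρ * Xᴴ).trace.re := by
    rw [trace_mul_comm (X * reduced V ρ), ← Matrix.mul_assoc, reduced, ← trace_extendE_mul, extendE_mul,
      extendE_conjTranspose, ← hT, Matrix.mul_assoc (extendE F X)ᴴ, trace_mul_comm (extendE F X)ᴴ, hadj,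
      reducedAdj, ← hT]
    convert re_trace_compress_le hTT ((hρ.mul_mul_conjTranspose_same T).mul_mul_conjTranspose_same
      (extendE F X)) using 3
    simp only [Matrix.mul_assoc]
  rw [quadFun, quadFun, e1]
  have := mul_le_mul_of_nonneg_left e3 ht.le
  linarith

end PartialTrace

/-! ### The equality case -/

namespace SpecPair

variable {n : Type*} [Fintype n] [DecidableEq n] {ρ σ : Matrix n n ℂ} (D : SpecPair ρ σ)

/-- The square root of `ρ`. -/
def leftSqrt : Matrix n n ℂ := D.U * diagonal (fun i => ((√(D.p i) : ℝ) : ℂ)) * D.Uᴴ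

/-- The square root of `σ`. -/
def rightSqrt : Matrix n n ℂ := D.W * diagonal (fun i => ((√(D.q i) : ℝ) : ℂ)) * D.Wᴴ

/-- The inverse square root of `σ` on its support. -/
def rightInvSqrt : Matrix n n ℂ := D.W * diagonal (fun i => (((√(D.q i))⁻¹ : ℝ) : ℂ)) * D.Wᴴ

theorem leftSqrt_mul_conjTranspose : D.leftSqrt * D.leftSqrtᴴ = ρ := by
  have h : D.leftSqrt * D.leftSqrtᴴ = D.U * (diagonal (fun i => ((√(D.p i) : ℝ) : ℂ)) *
      (D.Uᴴ * D.U) * diagonal (fun i => ((√(D.p i) : ℝ) : ℂ))) * D.Uᴴ := by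
    have : (diagonal (fun i => ((√(D.p i) : ℝ) : ℂ)))ᴴ =
        diagonal (fun i => ((√(D.p i) : ℝ) : ℂ)) := by
      rw [diagonal_conjTranspose]
      congr 1
      ext i
      simp
    simp only [leftSqrt, conjTranspose_mul, conjTranspose_conjTranspose, this, mul_assoc]
  rw [h, D.hU, mul_one, diagonal_mul_diagonal]
  refine Eq.trans ?_ D.left_eq.symm
  congr 3
  ext i
  rw [← Complex.ofReal_mul, Real.mul_self_sqrt (D.hp i)]

theorem rightInvSqrt_mul_leftSqrt : D.rightInvSqrt * D.leftSqrt =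
    D.W * (of fun i j => D.overlap i j * ((√(D.p j) / √(D.q i) : ℝ) : ℂ)) * D.Uᴴ := by
  have h : D.rightInvSqrt * D.leftSqrt = D.W * (diagonal (fun i => (((√(D.q i))⁻¹ : ℝ) : ℂ)) *
      D.overlap * diagonal (fun i => ((√(D.p i) : ℝ) : ℂ))) * D.Uᴴ := by
    simp only [rightInvSqrt, leftSqrt, overlap, mul_assoc]
  rw [h]
  congr 2
  ext i j
  simp only [mul_diagonal, diagonal_mul, of_apply]
  push_cast
  ring

variable {m : Type*} [Fintype m] [DecidableEq m] {ρ' σ' : Matrix m m ℂ} (D' : SpecPair ρ' σ')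

theorem sqrt_relation (Ψ : Matrix m m ℂ →ₗ[ℂ] Matrix n n ℂ)
    (h : ∀ t, 0 < t → ∀ i j, 0 < D.p j → (D.Wᴴ * Ψ (D'.optimizer t) * D.U) i j =
      D.overlap i j * ((D.p j / (D.q i + t * D.p j) : ℝ) : ℂ)) (i j : n) (hj : 0 < D.p j) :
    ((√(D.q i) : ℝ) : ℂ) * (D.Wᴴ * Ψ (D'.rightInvSqrt * D'.leftSqrt) * D.U) i j =
      D.overlap i j * ((√(D.p j) : ℝ) : ℂ) := by
  rcases (D.hq i).eq_or_lt with hi | hi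
  · have h0 : D.overlap i j = 0 := by
      simpa [overlap, hj.ne'] using D.supp i j hi.symm
    simp [← hi, h0]
  set L : m → m → ℂ := fun a b => (D.Wᴴ * Ψ (D'.W * single a b 1 * D'.Uᴴ) * D.U) i j with hL
  have lin : ∀ Y : Matrix m m ℂ, (D.Wᴴ * Ψ (D'.W * Y * D'.Uᴴ) * D.U) i j =
      ∑ k : m × m, Y k.1 k.2 * L k.1 k.2 := by
    intro Y
    conv_lhs => rw [matrix_eq_sum_single Y]
    simp only [Matrix.mul_sum, Matrix.sum_mul, map_sum, Matrix.sum_apply, Fintype.sum_prod_type]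
    refine Finset.sum_congr rfl fun a _ => Finset.sum_congr rfl fun b _ => ?_
    have : single a b (Y a b) = Y a b • single a b (1 : ℂ) := by simp
    rw [this]
    simp only [hL, Matrix.mul_smul, Matrix.smul_mul, map_smul, Matrix.smul_apply, smul_eq_mul]
  classical
  set c : m × m → ℂ := fun k =>
    if D'.p k.2 = 0 ∨ D'.q k.1 = 0 then 0 else D'.overlap k.1 k.2 * L k.1 k.2 with hc
  have hc0 : ∀ k, c k ≠ 0 → 0 < D'.p k.2 ∧ 0 < D'.q k.1 := by
    intro k hk
    have : ¬ (D'.p k.2 = 0 ∨ D'.q k.1 = 0) := fun h => hk (by simp only [hc, if_pos h])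
    push Not at this
    exact ⟨lt_of_le_of_ne (D'.hp _) this.1.symm, lt_of_le_of_ne (D'.hq _) this.2.symm⟩
  have hterm : ∀ (k : m × m) (f : ℝ), (D'.p k.2 = 0 → f = 0) →
      D'.overlap k.1 k.2 * (f : ℂ) * L k.1 k.2 = c k * (f : ℂ) := by
    intro k f hf
    by_cases h1 : D'.p k.2 = 0
    · simp [hf h1]
    by_cases h2 : D'.q k.1 = 0
    · have h0 : D'.overlap k.1 k.2 = 0 := by
        simpa [overlap, h1] using D'.supp k.1 k.2 h2
      simp [hc, h0]
    · simp only [hc, h1, h2, or_self, if_false]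
      ring
  have key := sum_sqrt_div_sqrt_of_sum_div c (fun k => D'.p k.2) (fun k => D'.q k.1) hc0
    (d := D.overlap i j) hj hi fun t ht => by
      rw [← h t ht i j hj, optimizer, lin]
      refine Finset.sum_congr rfl fun k _ => (hterm k _ fun h0 => ?_).symm
      simp [h0]
  rw [rightInvSqrt_mul_leftSqrt, lin]
  have : ∑ k : m × m, (of fun i j => D'.overlap i j * ((√(D'.p j) / √(D'.q i) : ℝ) : ℂ)) k.1 k.2 *
      L k.1 k.2 = ∑ k, c k * ((√(D'.p k.2) / √(D'.q k.1) : ℝ) : ℂ) := by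
    refine Finset.sum_congr rfl fun k _ => hterm k _ fun h0 => ?_
    simp [h0]
  rw [this, key]
  have : ((√(D.q i) : ℝ) : ℂ) ≠ 0 := by
    exact_mod_cast (Real.sqrt_pos.2 hi).ne'
  push_cast
  field_simp

theorem le_of_sqrt_relation (Z : Matrix n n ℂ)
    (h : ∀ i j, 0 < D.p j → ((√(D.q i) : ℝ) : ℂ) * (D.Wᴴ * Z * D.U) i j =
      D.overlap i j * ((√(D.p j) : ℝ) : ℂ)) :
    ((D.rightSqrt * Z) * (D.rightSqrt * Z)ᴴ - ρ).PosSemidef := by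
  set G := D.rightSqrt * Z * D.U with hG
  have hGe : ∀ i j, 0 < D.p j → G i j = D.U i j * ((√(D.p j) : ℝ) : ℂ) := by
    intro i j hj
    have e : G = D.W * (diagonal (fun i => ((√(D.q i) : ℝ) : ℂ)) * (D.Wᴴ * Z * D.U)) := by
      simp only [hG, rightSqrt, mul_assoc]
    have e2 : D.U = D.W * D.overlap := by
      rw [overlap, ← mul_assoc, D.hW', one_mul]
    rw [e, mul_apply, congrFun (congrFun e2 i) j, mul_apply, Finset.sum_mul]
    refine Finset.sum_congr rfl fun k _ => ?_
    rw [diagonal_mul, h k j hj, mul_assoc]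
  have hGG : (D.rightSqrt * Z) * (D.rightSqrt * Z)ᴴ = G * Gᴴ := by
    have : G * Gᴴ = D.rightSqrt * Z * (D.U * D.Uᴴ) * (D.rightSqrt * Z)ᴴ := by
      simp only [hG, conjTranspose_mul, mul_assoc]
    rw [this, D.hU', mul_one]
  set P : Matrix n n ℂ := diagonal (fun j => if D.p j = 0 then 1 else 0) with hP
  have : (D.rightSqrt * Z) * (D.rightSqrt * Z)ᴴ - ρ = (G * P) * (G * P)ᴴ := by
    rw [hGG]
    refine (congrArg (fun τ => G * Gᴴ - τ) D.left_eq).trans ?_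
    ext x y
    rw [Matrix.sub_apply, mul_apply, mul_apply, mul_apply, ← Finset.sum_sub_distrib]
    refine Finset.sum_congr rfl fun j _ => ?_
    simp only [conjTranspose_apply, hP, mul_diagonal]
    by_cases hj : D.p j = 0
    · simp [hj]
    · have hj' : 0 < D.p j := lt_of_le_of_ne (D.hp j) (Ne.symm hj)
      have hs : ((√(D.p j) : ℝ) : ℂ) * ((√(D.p j) : ℝ) : ℂ) = D.p j := by
        rw [← Complex.ofReal_mul, Real.mul_self_sqrt hj'.le]
      rw [hGe x j hj', hGe y j hj', ← hs]
      simp [hj]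
      ring
  rw [this]
  exact posSemidef_self_mul_conjTranspose _

end SpecPair

section CondEntropy

variable {R B C F : Type*} [Fintype R] [DecidableEq R] [Fintype B] [DecidableEq B]
  [Fintype C] [DecidableEq C] [Fintype F] [DecidableEq F]

theorem spectral_decomp {n : Type*} [Fintype n] [DecidableEq n] {A : Matrix n n ℂ}
    (hA : A.IsHermitian) : A = (hA.eigenvectorUnitary : Matrix n n ℂ) *
      diagonal (fun i => (hA.eigenvalues i : ℂ)) * (hA.eigenvectorUnitary : Matrix n n ℂ)ᴴ := by
  conv_lhs => rw [hA.spectral_theorem, Unitary.conjStarAlgAut_apply]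
  rfl

theorem eigenvectorUnitary_isometry {n : Type*} [Fintype n] [DecidableEq n] {A : Matrix n n ℂ}
    (hA : A.IsHermitian) :
    (hA.eigenvectorUnitary : Matrix n n ℂ)ᴴ * (hA.eigenvectorUnitary : Matrix n n ℂ) = 1 :=
  Unitary.coe_star_mul_self _

/-- The diagonal of `ρ` in a product basis whose second factor diagonalizes the marginal. -/
theorem sum_diag_conj_eigenvectorUnitary {ρ : Matrix (R × B) (R × B) ℂ}
    (hB : (ptraceLeft ρ).IsHermitian) (b : B) :
    ∑ r, (((1 : Matrix R R ℂ) ⊗ₖ (hB.eigenvectorUnitary : Matrix B B ℂ))ᴴ * ρ *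
      ((1 : Matrix R R ℂ) ⊗ₖ (hB.eigenvectorUnitary : Matrix B B ℂ))) (r, b) (r, b) =
      hB.eigenvalues b := by
  set w := (hB.eigenvectorUnitary : Matrix B B ℂ) with hw
  have h := ptraceLeft_conj (R := R) wᴴ ρ
  rw [← conjTranspose_one_kronecker, conjTranspose_conjTranspose, conjTranspose_conjTranspose,
    congrArg (fun τ => wᴴ * τ * w) (spectral_decomp hB), ← hw] at h
  have e : wᴴ * (w * diagonal (fun i => (hB.eigenvalues i : ℂ)) * wᴴ) * w =
      (wᴴ * w) * diagonal (fun i => (hB.eigenvalues i : ℂ)) * (wᴴ * w) := by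
    simp only [mul_assoc]
  rw [e, eigenvectorUnitary_isometry hB, one_mul, mul_one] at h
  simpa [ptraceLeft] using congrFun (congrFun h b) b

theorem conj_one_kronecker_diagonal (w : Matrix B B ℂ)
    (f : B → ℂ) : ((1 : Matrix R R ℂ) ⊗ₖ w) * diagonal (fun x : R × B => f x.2) *
      ((1 : Matrix R R ℂ) ⊗ₖ w)ᴴ = (1 : Matrix R R ℂ) ⊗ₖ (w * diagonal f * wᴴ) := by
  have : diagonal (fun x : R × B => f x.2) = (1 : Matrix R R ℂ) ⊗ₖ diagonal f := by
    rw [← diagonal_one, diagonal_kronecker_diagonal]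
    simp
  rw [conjTranspose_one_kronecker, this, ← mul_kronecker_mul, ← mul_kronecker_mul, one_mul,
    one_mul]

/-- The diagonalizations of `ρ` and of `1 ⊗ ρ_B`. -/
def condPair {ρ : Matrix (R × B) (R × B) ℂ} (hρ : ρ.PosSemidef) :
    SpecPair ρ ((1 : Matrix R R ℂ) ⊗ₖ ptraceLeft ρ) where
  U := hρ.1.eigenvectorUnitary
  W := (1 : Matrix R R ℂ) ⊗ₖ ((ptraceLeft_posSemidef hρ).1.eigenvectorUnitary : Matrix B B ℂ)
  p := hρ.1.eigenvalues
  q := fun x => (ptraceLeft_posSemidef hρ).1.eigenvalues x.2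
  hU := eigenvectorUnitary_isometry _
  hW := one_kronecker_isometry (eigenvectorUnitary_isometry _)
  hp := hρ.eigenvalues_nonneg
  hq := fun x => (ptraceLeft_posSemidef hρ).eigenvalues_nonneg x.2
  left_eq := spectral_decomp _
  right_eq := by
    conv_lhs => rw [spectral_decomp (ptraceLeft_posSemidef hρ).1]
    rw [← conj_one_kronecker_diagonal]
  supp := by
    rintro ⟨r, b⟩ j h0
    simp only at h0
    set W := (1 : Matrix R R ℂ) ⊗ₖ
      ((ptraceLeft_posSemidef hρ).1.eigenvectorUnitary : Matrix B B ℂ) with hW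
    set U := (hρ.1.eigenvectorUnitary : Matrix (R × B) (R × B) ℂ) with hU
    have hs := sum_diag_conj_eigenvectorUnitary (ptraceLeft_posSemidef hρ).1 b
    rw [← hW, h0, Complex.ofReal_zero,
      Finset.sum_eq_zero_iff_of_nonneg fun r _ => (hρ.conjTranspose_mul_mul_same W).diag_nonneg]
      at hs
    have hs := hs r (Finset.mem_univ _)
    have e : Wᴴ * ρ * W = (Wᴴ * U) * diagonal (fun i => (hρ.1.eigenvalues i : ℂ)) * (Wᴴ * U)ᴴ := by
      refine (congrArg (fun τ => Wᴴ * τ * W) (spectral_decomp hρ.1)).trans ?_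
      simp [mul_assoc, hU]
    rw [e, mul_apply] at hs
    have hterm : ∀ k, ((Wᴴ * U) * diagonal (fun i => (hρ.1.eigenvalues i : ℂ))) (r, b) k *
        (Wᴴ * U)ᴴ k (r, b) =
        ((Complex.normSq ((Wᴴ * U) (r, b) k) * hρ.1.eigenvalues k : ℝ) : ℂ) := by
      intro k
      rw [mul_diagonal, conjTranspose_apply, Complex.ofReal_mul, mul_right_comm]
      exact congrArg (· * _) (Complex.mul_conj _)
    rw [Finset.sum_congr rfl fun k _ => hterm k, ← Complex.ofReal_sum, Complex.ofReal_eq_zero,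
      Finset.sum_eq_zero_iff_of_nonneg fun k _ => mul_nonneg (Complex.normSq_nonneg _)
        (hρ.eigenvalues_nonneg k)] at hs
    simpa using hs j (Finset.mem_univ _)

theorem sum_weight_log_left {ρ : Matrix (R × B) (R × B) ℂ} (hρ : ρ.PosSemidef) :
    ∑ k, (condPair hρ).weight k * Real.log ((condPair hρ).p k.2) = -vnEntropy ρ := by
  rw [(condPair hρ).sum_weight_mul fun j => Real.log ((condPair hρ).p j), vnEntropy, dif_pos hρ.1]
  simp [Real.negMulLog, condPair]

theorem sum_weight_log_right {ρ : Matrix (R × B) (R × B) ℂ} (hρ : ρ.PosSemidef) :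
    ∑ k, (condPair hρ).weight k * Real.log ((condPair hρ).q k.1) = -vnEntropy (ptraceLeft ρ) := by
  rw [Fintype.sum_prod_type]
  simp only [← Finset.sum_mul, (condPair hρ).sum_weight_right]
  rw [Fintype.sum_prod_type, Finset.sum_comm, vnEntropy, dif_pos (ptraceLeft_posSemidef hρ).1,
    ← Finset.sum_neg_distrib]
  refine Finset.sum_congr rfl fun b _ => ?_
  have h := congrArg Complex.re
    (sum_diag_conj_eigenvectorUnitary (ptraceLeft_posSemidef hρ).1 b)
  rw [Complex.re_sum, Complex.ofReal_re] at h
  simp only [condPair, Real.negMulLog]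
  rw [← Finset.sum_mul, h]
  ring

/-- `reducedAdj` as a linear map. -/
def reducedAdjLin (V : Matrix (C × F) B ℂ) :
    Matrix (R × C) (R × C) ℂ →ₗ[ℂ] Matrix (R × B) (R × B) ℂ where
  toFun := reducedAdj V
  map_add' X Y := by
    simp only [reducedAdj, extendE_add, Matrix.mul_add, Matrix.add_mul]
  map_smul' c X := by
    simp only [reducedAdj, extendE_smul, Matrix.mul_smul, Matrix.smul_mul, RingHom.id_apply]

/-- Monotonicity of the conditional entropy under local channels, with its equality condition. -/
theorem condEntropy_mono {V : Matrix (C × F) B ℂ} (hV : Vᴴ * V = 1)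
    {ρ : Matrix (R × B) (R × B) ℂ} (hρ : ρ.PosSemidef) :
    vnEntropy (ptraceLeft (reduced V ρ)) - vnEntropy (ptraceLeft ρ) ≤
        vnEntropy (reduced V ρ) - vnEntropy ρ ∧
      (vnEntropy (ptraceLeft (reduced V ρ)) - vnEntropy (ptraceLeft ρ) =
        vnEntropy (reduced V ρ) - vnEntropy ρ →
        (((condPair hρ).rightSqrt * reducedAdj V ((condPair (reduced_posSemidef V hρ)).rightInvSqrt *
          (condPair (reduced_posSemidef V hρ)).leftSqrt)) *
        ((condPair hρ).rightSqrt * reducedAdj V ((condPair (reduced_posSemidef V hρ)).rightInvSqrt *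
          (condPair (reduced_posSemidef V hρ)).leftSqrt))ᴴ - ρ).PosSemidef) := by
  have hρ' := reduced_posSemidef V hρ
  have hσ : ((1 : Matrix R R ℂ) ⊗ₖ ptraceLeft ρ).PosSemidef :=
    PosSemidef.one.kronecker (ptraceLeft_posSemidef hρ)
  have hσ' : (1 : Matrix R R ℂ) ⊗ₖ ptraceLeft (reduced V ρ) =
      reduced V ((1 : Matrix R R ℂ) ⊗ₖ ptraceLeft ρ) := by
    rw [reduced_one_kronecker, ptraceLeft_reduced]
  obtain ⟨h1, h2⟩ := (condPair hρ).monotone (condPair hρ') (trace_reduced hV ρ).symm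
    (reducedAdjLin V) fun X t ht => by
      rw [hσ']
      exact quadFun_reduced_le hV hρ hσ X ht
  rw [sum_weight_log_left, sum_weight_log_right, sum_weight_log_left, sum_weight_log_right]
    at h1 h2
  refine ⟨by linarith, fun heq => ?_⟩
  exact (condPair hρ).le_of_sqrt_relation _
    ((condPair hρ).sqrt_relation (condPair hρ') (reducedAdjLin V) (h2 (by linarith)))

end CondEntropy

/-! ### Channels and their dilations -/

section Channels

set_option linter.unusedSectionVars false

variable {R B C F : Type*} [Fintype R] [DecidableEq R] [Fintype B] [DecidableEq B]
  [Fintype C] [DecidableEq C] [Fintype F] [DecidableEq F]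

/-- The map `M ↦ Tr_F (V M Vᴴ)`. -/
def dilationMap (V : Matrix (C × F) B ℂ) : Matrix B B ℂ →ₗ[ℂ] Matrix C C ℂ where
  toFun M := ptraceRight (V * M * Vᴴ)
  map_add' M N := by
    ext
    simp [ptraceRight, Matrix.mul_add, Matrix.add_mul, Finset.sum_add_distrib]
  map_smul' c M := by
    ext
    simp [ptraceRight, Finset.mul_sum]

theorem dilationMap_apply (V : Matrix (C × F) B ℂ) (M : Matrix B B ℂ) (x y : C) :
    dilationMap V M x y = ∑ f, ∑ b, ∑ a, V (x, f) a * M a b * star (V (y, f) b) := by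
  simp [dilationMap, ptraceRight, mul_apply, Finset.sum_mul]

theorem reduced_apply (V : Matrix (C × F) B ℂ) (ρ : Matrix (R × B) (R × B) ℂ) (x y : R × C) :
    reduced V ρ x y =
      ∑ f, ∑ b, ∑ a, V (x.2, f) a * ρ (x.1, a) (y.1, b) * star (V (y.2, f) b) := by
  simp only [reduced, ptrace3E, of_apply, conjTranspose_one_kronecker, mul_one_kronecker_apply,
    one_kronecker_mul_apply, Finset.sum_mul, conjTranspose_apply]

theorem idTensor_dilationMap (V : Matrix (C × F) B ℂ) (ρ : Matrix (R × B) (R × B) ℂ) :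
    idTensor R (dilationMap V) ρ = reduced V ρ := by
  ext x y
  rw [reduced_apply, idTensor, of_apply, dilationMap_apply]
  rfl

theorem isCPTP_dilationMap {V : Matrix (C × F) B ℂ} (hV : Vᴴ * V = 1) :
    IsCPTP (dilationMap V) := by
  refine ⟨fun k M hM => ?_, fun M => ?_⟩
  · rw [idTensor_dilationMap]
    exact reduced_posSemidef V hM
  · rw [dilationMap, LinearMap.coe_mk, AddHom.coe_mk, trace_ptraceRight, trace_mul_comm,
      ← Matrix.mul_assoc, hV, one_mul]

theorem IsCPTP.comp {Φ : Matrix B B ℂ →ₗ[ℂ] Matrix C C ℂ} {Ψ : Matrix F F ℂ →ₗ[ℂ] Matrix B B ℂ}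
    (hΦ : IsCPTP Φ) (hΨ : IsCPTP Ψ) : IsCPTP (Φ ∘ₗ Ψ) :=
  ⟨fun k M hM => hΦ.1 k _ (hΨ.1 k M hM), fun M => (hΦ.2 _).trans (hΨ.2 M)⟩

theorem ptraceRight_idTensor {Φ : Matrix B B ℂ →ₗ[ℂ] Matrix C C ℂ}
    (hΦ : ∀ M, (Φ M).trace = M.trace) (ρ : Matrix (R × B) (R × B) ℂ) :
    ptraceRight (idTensor R Φ ρ) = ptraceRight ρ := by
  ext x y
  exact hΦ (of fun a b => ρ (x, a) (y, b))

open scoped MatrixOrder Matrix.Norms.L2Operator in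
theorem exists_eq_conjTranspose_mul_self {n : Type*} [Fintype n] [DecidableEq n]
    {A : Matrix n n ℂ} (hA : A.PosSemidef) : ∃ K : Matrix n n ℂ, A = Kᴴ * K :=
  CStarAlgebra.nonneg_iff_eq_star_mul_self.1 hA.nonneg

/-- Every channel is of the form `M ↦ Tr_F (V M Vᴴ)` for an isometry `V`. -/
theorem IsCPTP.exists_dilation {Φ : Matrix B B ℂ →ₗ[ℂ] Matrix C C ℂ} (hΦ : IsCPTP Φ) :
    ∃ V : Matrix (C × Fin (Fintype.card B) × C) B ℂ, Vᴴ * V = 1 ∧ Φ = dilationMap V := by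
  set e := Fintype.equivFin B
  set v : Fin (Fintype.card B) × B → ℂ := fun k => if k.1 = e k.2 then 1 else 0 with hv
  obtain ⟨K, hK⟩ := exists_eq_conjTranspose_mul_self
    (hΦ.1 _ _ (posSemidef_vecMulVec_self_star v))
  have hent : ∀ a b x y, Φ (single a b 1) x y =
      ∑ f, star (K f (e a, x)) * K f (e b, y) := by
    intro a b x y
    have h := congrFun (congrFun hK (e a, x)) (e b, y)
    simp only [mul_apply, conjTranspose_apply, idTensor, of_apply] at h
    rw [← h]
    refine congrArg (fun N => Φ N x y) ?_
    ext c d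
    simp [vecMulVec_apply, hv, single_apply, ite_and]
    split_ifs <;> rfl
  set V : Matrix (C × Fin (Fintype.card B) × C) B ℂ :=
    of fun x a => star (K x.2 (e a, x.1)) with hV
  refine ⟨V, ?_, ?_⟩
  · ext a b
    have h := hΦ.2 (single b a 1)
    simp only [trace, diag, hent] at h
    simp only [mul_apply, conjTranspose_apply, hV, of_apply, star_star, Fintype.sum_prod_type,
      one_apply] at h ⊢
    simp only [mul_comm (K _ _)]
    rw [h]
    simp [single_apply, ite_and]
  · refine LinearMap.ext fun M => ?_
    ext x y
    rw [dilationMap_apply]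
    conv_lhs => rw [matrix_eq_sum_single M]
    have : ∀ a b, single a b (M a b) = M a b • single a b (1 : ℂ) := by simp
    simp only [this, map_sum, map_smul, Matrix.sum_apply, Matrix.smul_apply, hent, smul_eq_mul,
      Finset.mul_sum, hV, of_apply, star_star]
    rw [Finset.sum_comm]
    conv_rhs => rw [Finset.sum_comm]
    refine Finset.sum_congr rfl fun b _ => ?_
    rw [Finset.sum_comm]
    refine Finset.sum_congr rfl fun f _ => Finset.sum_congr rfl fun a _ => ?_
    ring

/-- A contraction extends to an isometry by enlarging the environment. -/
theorem exists_isometry_reduced_sub_posSemidef {V : Matrix (C × F) B ℂ}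
    (hV : (1 - Vᴴ * V).PosSemidef) (c : C) :
    ∃ W : Matrix (C × (F ⊕ B)) B ℂ, Wᴴ * W = 1 ∧
      ∀ ρ : Matrix (R × B) (R × B) ℂ, ρ.PosSemidef →
        (reduced W ρ - reduced V ρ).PosSemidef := by
  obtain ⟨K, hK⟩ := exists_eq_conjTranspose_mul_self hV
  set V' : Matrix (C × B) B ℂ := of fun x a => if x.1 = c then K x.2 a else 0 with hV'
  refine ⟨of fun x a => Sum.elim (fun f => V (x.1, f) a) (fun b => V' (x.1, b) a) x.2, ?_,
    fun ρ hρ => ?_⟩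
  · rw [← add_sub_cancel (Vᴴ * V) 1, hK]
    ext a b
    simp [mul_apply, Fintype.sum_prod_type, Finset.sum_add_distrib, hV']
  · convert reduced_posSemidef V' hρ using 1
    ext x y
    simp [reduced_apply]

/-- The Kraus operators of `M ↦ t (s M sᴴ ⊗ 1) tᴴ`, stacked into a single matrix. -/
def petzDilation (t : Matrix C (B × F) ℂ) (s : Matrix B B ℂ) : Matrix (C × F) B ℂ :=
  of fun x a => ∑ b, t x.1 (b, x.2) * s b a

theorem petzDilation_conjTranspose_mul (t : Matrix C (B × F) ℂ) (s : Matrix B B ℂ) :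
    (petzDilation t s)ᴴ * petzDilation t s = sᴴ * ptraceRight (tᴴ * t) * s := by
  ext a b
  simp only [mul_apply, conjTranspose_apply, petzDilation, of_apply, ptraceRight, star_sum,
    star_mul', Finset.sum_mul, Finset.mul_sum, Fintype.sum_prod_type]
  rw [Finset.sum_comm]
  refine (Finset.sum_congr rfl fun f _ => Finset.sum_comm).trans (Finset.sum_comm.trans ?_)
  refine Finset.sum_congr rfl fun c _ => ?_
  refine (Finset.sum_congr rfl fun f _ => Finset.sum_comm).trans (Finset.sum_comm.trans ?_)
  refine Finset.sum_congr rfl fun d _ => Finset.sum_congr rfl fun f _ =>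
    Finset.sum_congr rfl fun i _ => ?_
  ring

theorem reduced_petzDilation (t : Matrix (B × F) (B × F) ℂ) (s : Matrix B B ℂ)
    (L : Matrix (R × B) (R × B) ℂ) :
    reduced (petzDilation t s) (L * Lᴴ) =
      (((1 : Matrix R R ℂ) ⊗ₖ t) * extendE F (((1 : Matrix R R ℂ) ⊗ₖ s) * L)) *
        (((1 : Matrix R R ℂ) ⊗ₖ t) * extendE F (((1 : Matrix R R ℂ) ⊗ₖ s) * L))ᴴ := by
  have h : ∀ r x r' b f, (((1 : Matrix R R ℂ) ⊗ₖ t) * extendE F (((1 : Matrix R R ℂ) ⊗ₖ s) * L))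
      (r, x) (r', b, f) = (((1 : Matrix R R ℂ) ⊗ₖ petzDilation t s) * L) (r, x, f) (r', b) := by
    intro r x r' b f
    simp only [one_kronecker_mul_apply, extendE, submatrix_apply, kroneckerMap_apply,
      Equiv.prodAssoc_symm_apply, one_apply, petzDilation, of_apply, Fintype.sum_prod_type,
      mul_ite, mul_one, mul_zero, Finset.sum_ite_eq', Finset.mem_univ, if_true, Finset.mul_sum,
      Finset.sum_mul]
    rw [Finset.sum_comm]
    simp only [mul_assoc]
  have e : ((1 : Matrix R R ℂ) ⊗ₖ petzDilation t s) * (L * Lᴴ) *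
      ((1 : Matrix R R ℂ) ⊗ₖ petzDilation t s)ᴴ =
      (((1 : Matrix R R ℂ) ⊗ₖ petzDilation t s) * L) *
        (((1 : Matrix R R ℂ) ⊗ₖ petzDilation t s) * L)ᴴ := by
    simp only [conjTranspose_mul, Matrix.mul_assoc]
  rw [reduced, e]
  ext ⟨r, x⟩ ⟨r', y⟩
  rw [mul_apply, ptrace3E, of_apply, Fintype.sum_congr _ _ fun f => mul_apply]
  simp only [conjTranspose_apply, Fintype.sum_prod_type, h]
  rw [Finset.sum_comm]
  exact Finset.sum_congr rfl fun _ _ => Finset.sum_comm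

end Channels

section Recovery

/-- The function `f` applied to the eigenvalues of `A`. -/
def spectralMap {n : Type*} [Fintype n] [DecidableEq n] {A : Matrix n n ℂ} (hA : A.PosSemidef)
    (f : ℝ → ℝ) : Matrix n n ℂ :=
  (hA.1.eigenvectorUnitary : Matrix n n ℂ) * diagonal (fun i => (f (hA.1.eigenvalues i) : ℂ)) *
    (hA.1.eigenvectorUnitary : Matrix n n ℂ)ᴴ

theorem spectralMap_conjTranspose {n : Type*} [Fintype n] [DecidableEq n] {A : Matrix n n ℂ}
    (hA : A.PosSemidef) (f : ℝ → ℝ) : (spectralMap hA f)ᴴ = spectralMap hA f := by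
  have : (diagonal (fun i => (f (hA.1.eigenvalues i) : ℂ)))ᴴ =
      diagonal (fun i => (f (hA.1.eigenvalues i) : ℂ)) := by
    rw [diagonal_conjTranspose]
    congr 1
    ext i
    simp
  simp only [spectralMap, conjTranspose_mul, conjTranspose_conjTranspose, this, mul_assoc]

theorem spectralMap_mul {n : Type*} [Fintype n] [DecidableEq n] {A : Matrix n n ℂ}
    (hA : A.PosSemidef) (f g : ℝ → ℝ) :
    spectralMap hA f * spectralMap hA g = spectralMap hA fun x => f x * g x := by
  have h := eigenvectorUnitary_isometry hA.1
  set u := (hA.1.eigenvectorUnitary : Matrix n n ℂ) with hu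
  have e : spectralMap hA f * spectralMap hA g =
      u * (diagonal (fun i => (f (hA.1.eigenvalues i) : ℂ)) * (uᴴ * u) *
        diagonal (fun i => (g (hA.1.eigenvalues i) : ℂ))) * uᴴ := by
    simp only [spectralMap, hu, mul_assoc]
  rw [e, h, mul_one, diagonal_mul_diagonal, spectralMap]
  simp only [Complex.ofReal_mul, hu]

theorem spectralMap_id {n : Type*} [Fintype n] [DecidableEq n] {A : Matrix n n ℂ}
    (hA : A.PosSemidef) : spectralMap hA (fun x => x) = A :=
  (spectral_decomp hA.1).symm

theorem spectralMap_sqrt_conjTranspose_mul {n : Type*} [Fintype n] [DecidableEq n]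
    {A : Matrix n n ℂ} (hA : A.PosSemidef) :
    (spectralMap hA Real.sqrt)ᴴ * spectralMap hA Real.sqrt = A := by
  refine Eq.trans ?_ (spectralMap_id hA)
  rw [spectralMap_conjTranspose, spectralMap_mul, spectralMap, spectralMap]
  simp only [Real.mul_self_sqrt (hA.eigenvalues_nonneg _)]

theorem one_sub_spectralMap_inv_sqrt_posSemidef {n : Type*} [Fintype n] [DecidableEq n]
    {A : Matrix n n ℂ} (hA : A.PosSemidef) :
    (1 - (spectralMap hA fun x => (√x)⁻¹)ᴴ * A * spectralMap hA fun x => (√x)⁻¹).PosSemidef := by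
  have e : (spectralMap hA fun x => (√x)⁻¹)ᴴ * A * (spectralMap hA fun x => (√x)⁻¹) =
      spectralMap hA fun x => (√x)⁻¹ * x * (√x)⁻¹ := by
    rw [← spectralMap_mul, ← spectralMap_mul, spectralMap_conjTranspose, spectralMap_id]
  have h1 : (1 : Matrix n n ℂ) = (hA.1.eigenvectorUnitary : Matrix n n ℂ) * 1 *
      (hA.1.eigenvectorUnitary : Matrix n n ℂ)ᴴ := by
    rw [mul_one]
    exact (mul_eq_one_comm.1 (eigenvectorUnitary_isometry hA.1)).symm
  rw [e, spectralMap, h1, ← sub_mul, ← mul_sub]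
  refine PosSemidef.mul_mul_conjTranspose_same ?_ _
  rw [← diagonal_one, diagonal_sub, posSemidef_diagonal_iff]
  intro i
  have hi := hA.eigenvalues_nonneg i
  rw [sub_nonneg, ← Complex.ofReal_one, Complex.real_le_real]
  rcases hi.eq_or_lt with h0 | h0
  · simp [← h0]
  · have := Real.sqrt_pos.2 h0
    rw [mul_right_comm, ← mul_inv, Real.mul_self_sqrt hi, inv_mul_cancel₀ h0.ne']

variable {R Q E : Type*} [Fintype R] [DecidableEq R] [Fintype Q] [DecidableEq Q]
  [Fintype E] [DecidableEq E]

theorem rightSqrt_condPair {ρ : Matrix (R × Q) (R × Q) ℂ} (hρ : ρ.PosSemidef) :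
    (condPair hρ).rightSqrt =
      (1 : Matrix R R ℂ) ⊗ₖ spectralMap (ptraceLeft_posSemidef hρ) Real.sqrt := by
  rw [spectralMap, ← conj_one_kronecker_diagonal]
  rfl

theorem rightInvSqrt_condPair {ρ : Matrix (R × Q) (R × Q) ℂ} (hρ : ρ.PosSemidef) :
    (condPair hρ).rightInvSqrt =
      (1 : Matrix R R ℂ) ⊗ₖ spectralMap (ptraceLeft_posSemidef hρ) fun x => (√x)⁻¹ := by
  rw [spectralMap, ← conj_one_kronecker_diagonal]
  rfl

theorem reduced_one (ρ : Matrix (R × Q × E) (R × Q × E) ℂ) :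
    reduced (1 : Matrix (Q × E) (Q × E) ℂ) ρ = ptrace3E ρ := by
  rw [reduced, one_kronecker_one, conjTranspose_one, one_mul, mul_one]

theorem condMutualInfo_nonneg {ρ : Matrix (R × Q × E) (R × Q × E) ℂ} (hρ : ρ.PosSemidef) :
    0 ≤ condMutualInfo ρ := by
  have h := (condEntropy_mono (V := (1 : Matrix (Q × E) (Q × E) ℂ)) (by simp) hρ).1
  rw [reduced_one] at h
  rw [condMutualInfo]
  linarith

/-- Vanishing conditional mutual information yields a recovery channel acting on `Q`. -/
theorem exists_recovery {ρ : Matrix (R × Q × E) (R × Q × E) ℂ} (hρ : IsState ρ)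
    (h : condMutualInfo ρ = 0) :
    ∃ Φ : Matrix Q Q ℂ →ₗ[ℂ] Matrix (Q × E) (Q × E) ℂ, IsCPTP Φ ∧
      idTensor R Φ (ptrace3E ρ) = ρ := by
  have hρ' := ptrace3E_posSemidef hρ.1
  obtain ⟨t, s, hts, hs⟩ : ∃ (t : Matrix (Q × E) (Q × E) ℂ) (s : Matrix Q Q ℂ),
      (1 - (petzDilation t s)ᴴ * petzDilation t s).PosSemidef ∧
        (reduced (petzDilation t s) (ptrace3E ρ) - ρ).PosSemidef := by
    rw [← reduced_one]
    have hA := (condEntropy_mono (V := (1 : Matrix (Q × E) (Q × E) ℂ)) (by simp) hρ.1).2 (by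
      rw [reduced_one]
      rw [condMutualInfo] at h
      linarith)
    rw [reducedAdj, one_kronecker_one, conjTranspose_one, one_mul, mul_one, rightSqrt_condPair,
      rightInvSqrt_condPair, ← reduced_petzDilation, SpecPair.leftSqrt_mul_conjTranspose] at hA
    refine ⟨_, _, ?_, hA⟩
    rw [petzDilation_conjTranspose_mul, spectralMap_sqrt_conjTranspose_mul]
    have e : ptraceRight (ptraceLeft ρ) =
        ptraceLeft (reduced (1 : Matrix (Q × E) (Q × E) ℂ) ρ) := by
      rw [ptraceLeft_reduced, one_mul, conjTranspose_one, mul_one]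
    rw [e]
    exact one_sub_spectralMap_inv_sqrt_posSemidef _
  obtain ⟨c⟩ : Nonempty (Q × E) := by
    by_contra hc
    rw [not_nonempty_iff] at hc
    simpa using hρ.2
  obtain ⟨W, hW, hle⟩ := exists_isometry_reduced_sub_posSemidef (R := R) hts c
  refine ⟨dilationMap W, isCPTP_dilationMap hW, ?_⟩
  rw [idTensor_dilationMap, ← sub_eq_zero]
  have hpos := (hle _ hρ').add hs
  rw [sub_add_sub_cancel] at hpos
  rw [← hpos.trace_eq_zero_iff, trace_sub, trace_reduced hW, trace_ptrace3E, sub_self]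

end Recovery

/-- For a tripartite state `ρ_RQE`, the following are equivalent:
(a) every joint system-environment isometric evolution satisfies the quantum
data-processing inequality for the reduced reference-system dynamics;
(b) `I(R;E|Q)_ρ = 0`;
(c) every joint system-environment isometric evolution yields CPTP reduced dynamics. -/
theorem stmt0 {R Q E : Type} [Fintype R] [DecidableEq R] [Fintype Q] [DecidableEq Q]
    [Fintype E] [DecidableEq E]
    (ρ : Matrix (R × Q × E) (R × Q × E) ℂ) (hρ : IsState ρ) :
    List.TFAE
      [ (∀ (Q' E' : Type) [Fintype Q'] [DecidableEq Q'] [Fintype E'] [DecidableEq E']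
          (V : Matrix (Q' × E') (Q × E) ℂ), Vᴴ * V = 1 →
          mutualInfo (ptrace3E
              (((1 : Matrix R R ℂ) ⊗ₖ V) * ρ * ((1 : Matrix R R ℂ) ⊗ₖ V)ᴴ))
            ≤ mutualInfo (ptrace3E ρ)),
        condMutualInfo ρ = 0,
        (∀ (Q' E' : Type) [Fintype Q'] [DecidableEq Q'] [Fintype E'] [DecidableEq E']
          (V : Matrix (Q' × E') (Q × E) ℂ), Vᴴ * V = 1 →
          ∃ ℰ : Matrix Q Q ℂ →ₗ[ℂ] Matrix Q' Q' ℂ, IsCPTP ℰ ∧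
            ptrace3E (((1 : Matrix R R ℂ) ⊗ₖ V) * ρ * ((1 : Matrix R R ℂ) ⊗ₖ V)ᴴ)
              = idTensor R ℰ (ptrace3E ρ)) ] := by
  tfae_have 1 → 2 := by
    intro h
    set V : Matrix ((Q × E) × Unit) (Q × E) ℂ := of fun x y => (1 : Matrix (Q × E) (Q × E) ℂ) x.1 y
      with hV
    have hVV : Vᴴ * V = 1 := by
      ext a b
      rw [mul_apply, Fintype.sum_prod_type]
      simp [hV, one_apply, eq_comm]
      split_ifs <;> simp
    have hred : reduced V ρ = ρ := by
      ext x y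
      simp [reduced_apply, hV, one_apply]
    have hR : ptraceRight (ptrace3E ρ) = ptraceRight ρ := by
      ext x y
      simp [ptraceRight, ptrace3E, Fintype.sum_prod_type]
    have hle := h (Q × E) Unit V hVV
    change mutualInfo (reduced V ρ) ≤ _ at hle
    rw [hred, mutualInfo, mutualInfo, hR] at hle
    refine le_antisymm ?_ (condMutualInfo_nonneg hρ.1)
    rw [condMutualInfo]
    linarith
  tfae_have 2 → 3 := by
    intro h Q' E' _ _ _ _ V hV
    obtain ⟨Φ, hΦ, hΦρ⟩ := exists_recovery hρ h
    refine ⟨dilationMap V ∘ₗ Φ, (isCPTP_dilationMap hV).comp hΦ, ?_⟩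
    change reduced V ρ = idTensor R (dilationMap V) (idTensor R Φ (ptrace3E ρ))
    rw [hΦρ, idTensor_dilationMap]
  tfae_have 3 → 1 := by
    intro h Q' E' _ _ _ _ V hV
    obtain ⟨Φ, hΦ, hΦρ⟩ := h Q' E' V hV
    have hR := ptraceRight_idTensor hΦ.2 (ptrace3E ρ)
    obtain ⟨W, hW, rfl⟩ := hΦ.exists_dilation
    have hle := (condEntropy_mono hW (ptrace3E_posSemidef hρ.1)).1
    rw [hΦρ, mutualInfo, mutualInfo, hR, idTensor_dilationMap]
    linarith
  tfae_finish
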